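/- Let V be a finite-dimensional complex vector space with a nondegenerate Hermitian form ω of signature (p, n−p) where n = dim V, and let k ≤ n. Two k-dimensional subspaces U₁, U₂ of V lie in the same orbit of the unitary group U(V, ω) acting on the Grassmannian of k-planes if and only if the restricted forms ω|_{U₁} and ω|_{U₂} have the same signature (a, b, c), where a and b are the numbers of positive and negative squares and c is the dimension of the radical. -/

import Mathlib

open Module Submodule

noncomputable section

variable {V : Type} [AddCommGroup V] [Module ℂ V]

/-- A sesquilinear form is Hermitian. -/
def IsHermitianForm (ω : V →ₗ⋆[ℂ] V →ₗ[ℂ] ℂ) : Prop :=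
  ∀ x y, ω x y = star (ω y x)

/-- Nondegeneracy of a sesquilinear form. -/
def IsNondeg (ω : V →ₗ⋆[ℂ] V →ₗ[ℂ] ℂ) : Prop :=
  ∀ x, (∀ y, ω x y = 0) → x = 0

/-- The orthogonal complement (in all of `V`) of a subspace with respect to `ω`. -/
def perp (ω : V →ₗ⋆[ℂ] V →ₗ[ℂ] ℂ) (U : Submodule ℂ V) : Submodule ℂ V where
  carrier := {v | ∀ u ∈ U, ω v u = 0}
  add_mem' := by
    intro a b ha hb u hu
    simp [ha u hu, hb u hu]
  zero_mem' := by
    intro u hu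
    simp
  smul_mem' := by
    intro c a ha u hu
    simp [LinearMap.map_smulₛₗ, ha u hu]

/-- `ω` is positive definite on the subspace `W`. -/
def PosDefOn (ω : V →ₗ⋆[ℂ] V →ₗ[ℂ] ℂ) (W : Submodule ℂ V) : Prop :=
  ∀ x ∈ W, x ≠ 0 → 0 < (ω x x).re

/-- `ω` is negative definite on the subspace `W`. -/
def NegDefOn (ω : V →ₗ⋆[ℂ] V →ₗ[ℂ] ℂ) (W : Submodule ℂ V) : Prop :=
  ∀ x ∈ W, x ≠ 0 → (ω x x).re < 0

/-- `ω` restricted to `U` has signature `(a, b, c)`: `a` (resp. `b`) is the maximal dimension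
of a positive (resp. negative) definite subspace of `U` and `c` is the dimension of the
radical of `ω|_U`. -/
def HasSignature (ω : V →ₗ⋆[ℂ] V →ₗ[ℂ] ℂ) (U : Submodule ℂ V) (a b c : ℕ) : Prop :=
  IsGreatest {d | ∃ W : Submodule ℂ V, W ≤ U ∧ PosDefOn ω W ∧ finrank ℂ W = d} a ∧
  IsGreatest {d | ∃ W : Submodule ℂ V, W ≤ U ∧ NegDefOn ω W ∧ finrank ℂ W = d} b ∧
  finrank ℂ (U ⊓ perp ω U : Submodule ℂ V) = c

/-!
A Hermitian form on a finite-dimensional space has a Sylvester basis: an orthogonal basis of vectors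
of length `1`, `-1` or `0`. By the law of inertia the numbers of vectors of each length are the
signature. So two subspaces of equal signature have Sylvester bases with the same Gram matrix, and
Witt's theorem extends the linear map matching these bases to a unitary map. Witt's theorem adds one
vector at a time, moving it to its target by at most two quasi-reflections that fix the vectors
already matched.
-/

/-- The unitary group `U(V, ω)`: the linear automorphisms of `V` preserving `ω`. Membership
unfolds to `∀ x y, ω (φ x) (φ y) = ω x y`. -/
def unitaryGroup (ω : V →ₗ⋆[ℂ] V →ₗ[ℂ] ℂ) : Subgroup (V ≃ₗ[ℂ] V) where
  carrier := {φ | ∀ x y, ω (φ x) (φ y) = ω x y}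
  mul_mem' hφ hψ x y := (hφ _ _).trans (hψ x y)
  one_mem' _ _ := rfl
  inv_mem' {φ} hφ x y := by simpa using (hφ (φ⁻¹ x) (φ⁻¹ y)).symm

/-- `e` is a Sylvester basis of `U` with signs `ε`: an `ω`-orthogonal basis of `U` such that
`ω (e i) (e i)` is `1`, `-1` or `0`, as recorded by `ε i`. The basis is encoded as a linearly
independent family in `V` spanning `U`. -/
structure IsSylvesterBasis (ω : V →ₗ⋆[ℂ] V →ₗ[ℂ] ℂ) (U : Submodule ℂ V) {ι : Type*}
    (e : ι → V) (ε : ι → SignType) : Prop where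
  linearIndependent : LinearIndependent ℂ e
  span_range : span ℂ (Set.range e) = U
  isOrthoᵢ : ω.IsOrthoᵢ e
  apply_self : ∀ i, ω (e i) (e i) = (ε i : ℂ)

variable {ω : V →ₗ⋆[ℂ] V →ₗ[ℂ] ℂ} {U U₁ U₂ : Submodule ℂ V} {ι κ : Type*}

namespace IsHermitianForm

lemma apply_eq_zero_comm (hω : IsHermitianForm ω) {x y : V} : ω x y = 0 ↔ ω y x = 0 := by
  rw [hω x y, star_eq_zero]

lemma perp_perp (hω : IsHermitianForm ω) (hnd : IsNondeg ω) (U : Submodule ℂ V)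
    [FiniteDimensional ℂ U] : perp ω (perp ω U) = U := by
  refine le_antisymm (fun x hx ↦ ?_) fun u hu v hv ↦ hω.apply_eq_zero_comm.mp (hv u hu)
  have hmem : ω x ∈ (U.map ω).dualCoannihilator.dualAnnihilator := by
    refine (mem_dualAnnihilator _).mpr fun v hv ↦ hx v fun u hu ↦ ?_
    exact hω.apply_eq_zero_comm.mp ((mem_dualCoannihilator _).mp hv _ (mem_map_of_mem hu))
  rw [Subspace.dualCoannihilator_dualAnnihilator_eq] at hmem
  obtain ⟨u, hu, hux⟩ := hmem
  have hxu : x - u = 0 := hnd _ fun y ↦ by simp [hux]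
  rwa [sub_eq_zero.mp hxu]

lemma exists_mem_perp_apply_ne_zero (hω : IsHermitianForm ω) (hnd : IsNondeg ω)
    [FiniteDimensional ℂ U] {x : V} (hx : x ∉ U) : ∃ u ∈ perp ω U, ω x u ≠ 0 := by
  rw [← hω.perp_perp hnd U] at hx
  by_contra! h
  exact hx h

/-! ### Witt's extension theorem -/

/-- These maps are the quasi-reflections along `z`; the condition on `d` comes from expanding
`ω (φ v) (φ v) = ω v v`. -/
lemma exists_mem_unitaryGroup_eq_add_smul (hω : IsHermitianForm ω) {z : V} {d : ℂ} (hd : d ≠ 0)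
    (hz : d + star d + ω z z = 0) :
    ∃ φ ∈ unitaryGroup ω, ∀ v, φ v = v + (d⁻¹ * ω z v) • z := by
  have hd' : star d ≠ 0 := star_ne_zero.mpr hd
  have hzz : ω z z = -(d + star d) := by linear_combination hz
  have hunit : IsUnit (1 + (d⁻¹ • ω z) z) := by
    have : 1 + (d⁻¹ • ω z) z = -(d⁻¹ * star d) := by
      simp only [LinearMap.smul_apply, smul_eq_mul, hzz]
      field_simp
      ring
    rw [this]
    exact (neg_ne_zero.mpr (mul_ne_zero (inv_ne_zero hd) hd')).isUnit
  refine ⟨LinearEquiv.dilatransvection hunit, fun v w ↦ ?_, fun v ↦ ?_⟩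
  · simp only [LinearEquiv.dilatransvection.apply, map_add, LinearMap.add_apply, map_smul,
      LinearMap.map_smulₛₗ, LinearMap.smul_apply, smul_eq_mul, map_mul, map_inv₀, hω v z, hzz,
      starRingEnd_apply]
    field_simp
    ring
  · simp [LinearEquiv.dilatransvection.apply]

lemma exists_mem_unitaryGroup_of_apply_sub_ne_zero (hω : IsHermitianForm ω) {x y : V}
    (hxy : ω x x = ω y y) (h : ω (y - x) x ≠ 0) :
    ∃ φ ∈ unitaryGroup ω, φ x = y ∧ ∀ v, ω (y - x) v = 0 → φ v = v := by
  have hz : ω (y - x) x + star (ω (y - x) x) + ω (y - x) (y - x) = 0 := by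
    rw [← hω]
    simp only [map_sub, LinearMap.sub_apply, hxy]
    ring
  obtain ⟨φ, hφ, hφv⟩ := hω.exists_mem_unitaryGroup_eq_add_smul h hz
  refine ⟨φ, hφ, ?_, fun v hv ↦ ?_⟩
  · rw [hφv, inv_mul_cancel₀ h, one_smul, add_sub_cancel]
  · rw [hφv, hv, mul_zero, zero_smul, add_zero]

lemma exists_mem_unitaryGroup_eq_add_mul_smul (hω : IsHermitianForm ω) (u : V) :
    ∃ c : ℂ, c ≠ 0 ∧ ∃ φ ∈ unitaryGroup ω, ∀ v, φ v = v + (c * ω u v) • u := by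
  obtain ⟨q, hq⟩ : ∃ q : ℝ, ω u u = q := Complex.conj_eq_iff_real.mp (hω u u).symm
  -- The imaginary part keeps `d` nonzero even when `u` is isotropic.
  let d : ℂ := ⟨-q / 2, 1⟩
  have hd : d ≠ 0 := fun h ↦ one_ne_zero (congrArg Complex.im h)
  have hu : d + star d + ω u u = 0 := by
    apply Complex.ext <;> simp [d, hq]
  exact ⟨d⁻¹, inv_ne_zero hd, hω.exists_mem_unitaryGroup_eq_add_smul hd hu⟩

lemma exists_mem_perp_apply_ne_zero_and_ne_zero (hω : IsHermitianForm ω) (hnd : IsNondeg ω)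
    [FiniteDimensional ℂ U] {x y : V} (hx : x ∉ U) (hy : y ∉ U) :
    ∃ u ∈ perp ω U, ω x u ≠ 0 ∧ ω y u ≠ 0 := by
  obtain ⟨u, hu, huxy⟩ := Dual.exists_forall_mem_ne_zero_of_forall_exists (perp ω U) ![ω x, ω y]
    (Fin.forall_fin_two.mpr ⟨hω.exists_mem_perp_apply_ne_zero hnd hx,
      hω.exists_mem_perp_apply_ne_zero hnd hy⟩)
  exact ⟨u, hu, huxy 0, huxy 1⟩

lemma exists_mem_unitaryGroup_fixing (hω : IsHermitianForm ω) (hnd : IsNondeg ω)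
    [FiniteDimensional ℂ U] {x y : V} (hx : x ∉ U) (hy : y ∉ U) (hxy : ω x x = ω y y)
    (hU : ∀ v ∈ U, ω x v = ω y v) :
    ∃ φ ∈ unitaryGroup ω, φ x = y ∧ ∀ v ∈ U, φ v = v := by
  by_cases h : ω (y - x) x = 0
  · -- A quasi-reflection `φ` along some `u` orthogonal to `U` first makes `ω (y - φ x) (φ x)`
    -- nonzero.
    obtain ⟨u, hu, hxu, hyu⟩ := hω.exists_mem_perp_apply_ne_zero_and_ne_zero hnd hx hy
    obtain ⟨c, hc, φ, hφ, hφv⟩ := hω.exists_mem_unitaryGroup_eq_add_mul_smul u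
    have hux : ω u x ≠ 0 := hω.apply_eq_zero_comm.not.mp hxu
    have hφU (v) (hv : v ∈ U) : φ v = v := by rw [hφv, hu v hv, mul_zero, zero_smul, add_zero]
    have hφxU (v) (hv : v ∈ U) : ω (φ x) v = ω x v := by rw [← hφ x v, hφU v hv]
    have hyφx : ω (y - φ x) (φ x) = c * ω u x * ω y u := by
      have hyx : ω y x = ω x x := by simpa [sub_eq_zero] using h
      rw [map_sub, LinearMap.sub_apply, hφ, hφv, map_add, map_smul, hyx, smul_eq_mul,
        add_sub_cancel_left]
    obtain ⟨ψ, hψ, hψx, hψv⟩ := hω.exists_mem_unitaryGroup_of_apply_sub_ne_zero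
      ((hφ x x).trans hxy) (hyφx ▸ mul_ne_zero (mul_ne_zero hc hux) hyu)
    refine ⟨ψ * φ, mul_mem hψ hφ, hψx, fun v hv ↦ ?_⟩
    rw [LinearEquiv.mul_apply, hφU v hv, hψv]
    rw [map_sub, LinearMap.sub_apply, hφxU v hv, hU v hv, sub_self]
  · obtain ⟨φ, hφ, hφx, hφv⟩ := hω.exists_mem_unitaryGroup_of_apply_sub_ne_zero hxy h
    refine ⟨φ, hφ, hφx, fun v hv ↦ hφv v ?_⟩
    rw [map_sub, LinearMap.sub_apply, hU v hv, sub_self]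

theorem exists_mem_unitaryGroup_of_gram_eq (hω : IsHermitianForm ω) (hnd : IsNondeg ω) [Finite ι]
    {x y : ι → V} (hx : LinearIndependent ℂ x) (hy : LinearIndependent ℂ y)
    (hxy : ∀ i j, ω (x i) (x j) = ω (y i) (y j)) :
    ∃ φ ∈ unitaryGroup ω, ∀ i, φ (x i) = y i := by
  classical
  have := Fintype.ofFinite ι
  suffices h : ∀ s : Finset ι, ∃ φ ∈ unitaryGroup ω, ∀ i ∈ s, φ (x i) = y i by
    simpa using h Finset.univ
  intro s
  induction s using Finset.induction_on with
  | empty => exact ⟨1, one_mem _, by simp⟩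
  | insert i s hi ih =>
    obtain ⟨φ, hφ, hφx⟩ := ih
    have : FiniteDimensional ℂ (span ℂ (y '' s)) := .span_of_finite ℂ (s.finite_toSet.image y)
    have hφxi : φ (x i) ∉ span ℂ (y '' s) := by
      have himage : (φ ∘ x) '' s = y '' s := Set.image_congr hφx
      exact himage ▸ (hx.map' φ.toLinearMap φ.ker).notMem_span_image hi
    have hpair (v) (hv : v ∈ span ℂ (y '' s)) : ω (φ (x i)) v = ω (y i) v := by
      refine LinearMap.eqOn_span ?_ hv
      rintro _ ⟨j, hj, rfl⟩
      rw [← hφx j hj, hφ, hxy, hφx j hj]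
    obtain ⟨ψ, hψ, hψi, hψv⟩ := hω.exists_mem_unitaryGroup_fixing hnd hφxi
      (hy.notMem_span_image hi) ((hφ _ _).trans (hxy i i)) hpair
    refine ⟨ψ * φ, mul_mem hψ hφ, (Finset.forall_mem_insert ..).mpr ⟨hψi, fun j hj ↦ ?_⟩⟩
    rw [LinearEquiv.mul_apply, hφx j hj, hψv _ (subset_span (Set.mem_image_of_mem y hj))]

end IsHermitianForm

/-! ### Sylvester bases -/

lemma apply_eq_zero_of_forall_apply_self_eq_zero (h : ∀ x ∈ U, ω x x = 0) {x y : V} (hx : x ∈ U)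
    (hy : y ∈ U) : ω x y = 0 := by
  have h₁ := h _ (U.add_mem hx hy)
  have hI := h _ (U.add_mem hx (U.smul_mem Complex.I hy))
  simp only [map_add, LinearMap.add_apply, map_smul, LinearMap.map_smulₛₗ, LinearMap.smul_apply,
    smul_eq_mul, h x hx, h y hy, Complex.conj_I] at h₁ hI
  linear_combination (1 / 2) * h₁ - (Complex.I / 2) * hI +
    (ω x y - ω y x) / 2 * Complex.I_mul_I

lemma IsHermitianForm.exists_smul_apply_self_eq_sign (hω : IsHermitianForm ω) {x : V}
    (hx : ω x x ≠ 0) : ∃ c : ℂ, c ≠ 0 ∧ ∃ s : SignType, ω (c • x) (c • x) = (s : ℂ) := by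
  obtain ⟨r, hr⟩ : ∃ r : ℝ, ω x x = r := Complex.conj_eq_iff_real.mp (hω x x).symm
  have hr₀ : r ≠ 0 := by
    rintro rfl
    exact hx (by simpa using hr)
  have hscale : (√|r|)⁻¹ * ((√|r|)⁻¹ * r) = (SignType.sign r : ℝ) := by
    rw [← mul_assoc, ← mul_inv, Real.mul_self_sqrt (abs_nonneg r),
      inv_mul_eq_iff_eq_mul₀ (abs_ne_zero.mpr hr₀), abs_mul_sign]
  refine ⟨((√|r|)⁻¹ : ℝ), by simpa using hr₀, SignType.sign r, ?_⟩
  simp only [map_smul, LinearMap.map_smulₛₗ, LinearMap.smul_apply, smul_eq_mul, hr,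
    Complex.conj_ofReal]
  rw [← Complex.ofReal_mul, ← Complex.ofReal_mul, hscale]
  exact SignType.map_cast Complex.ofRealHom _

lemma span_singleton_sup_inf_ker_eq {K E : Type*} [Field K] [AddCommGroup E] [Module K E]
    {W : Submodule K E} {f : E →ₗ[K] K} {x : E} (hx : x ∈ W) (hfx : f x ≠ 0) :
    span K {x} ⊔ W ⊓ LinearMap.ker f = W := by
  rw [inf_comm, ← sup_inf_assoc_of_le _ ((span_singleton_le_iff_mem x W).mpr hx),
    f.span_singleton_sup_ker_eq_top hfx, top_inf_eq]

namespace IsSylvesterBasis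

lemma cons (hω : IsHermitianForm ω) {m : ℕ} {e : Fin m → V} {ε : Fin m → SignType} {x : V}
    {s : SignType} (he : IsSylvesterBasis ω (U ⊓ LinearMap.ker (ω x)) e ε) (hx : x ∈ U)
    (hxx : ω x x ≠ 0) (hxs : ω x x = (s : ℂ)) :
    IsSylvesterBasis ω U (Fin.cons x e : Fin (m + 1) → V)
      (Fin.cons s ε : Fin (m + 1) → SignType) := by
  have hxe (i) : ω x (e i) = 0 := (he.span_range.le (subset_span ⟨i, rfl⟩)).2
  constructor
  · exact linearIndependent_finCons.mpr
      ⟨he.linearIndependent, fun hmem ↦ hxx (he.span_range.le hmem).2⟩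
  · rw [Fin.range_cons, span_insert, he.span_range, span_singleton_sup_inf_ker_eq hx hxx]
  · refine Fin.cases (Fin.cases (absurd rfl) fun j _ ↦ hxe j) fun i ↦ Fin.cases (fun _ ↦ ?_) ?_
    · exact hω.apply_eq_zero_comm.mp (hxe i)
    · exact fun j hij ↦ he.isOrthoᵢ (ne_of_apply_ne Fin.succ hij)
  · exact Fin.cases hxs he.apply_self

end IsSylvesterBasis

theorem IsHermitianForm.exists_isSylvesterBasis (hω : IsHermitianForm ω) (U : Submodule ℂ V)
    [FiniteDimensional ℂ U] :
    ∃ (m : ℕ) (e : Fin m → V) (ε : Fin m → SignType), IsSylvesterBasis ω U e ε := by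
  induction hd : finrank ℂ U using Nat.strong_induction_on generalizing U with
  | _ d ih =>
    subst hd
    by_cases! hU : ∀ x ∈ U, ω x x = 0
    · let b := finBasis ℂ U
      refine ⟨_, fun i ↦ b i, 0, b.linearIndependent.map' U.subtype U.ker_subtype, ?_,
        fun i j _ ↦ ?_, fun i ↦ by simpa using hU _ (b i).2⟩
      · have hrange := congrArg (map U.subtype) b.span_eq
        rwa [map_span, ← Set.range_comp, Submodule.map_top, range_subtype] at hrange
      · exact apply_eq_zero_of_forall_apply_self_eq_zero hU (b i).2 (b j).2
    · obtain ⟨x, hx, hxx⟩ := hU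
      obtain ⟨c, hc, s, hs⟩ := hω.exists_smul_apply_self_eq_sign hxx
      have hcxU : c • x ∈ U := U.smul_mem c hx
      have hcx : ω (c • x) (c • x) ≠ 0 := by simp [hc, hxx]
      have hlt : U ⊓ LinearMap.ker (ω (c • x)) < U := inf_lt_left.mpr fun hle ↦ hcx (hle hcxU)
      have : FiniteDimensional ℂ (U ⊓ LinearMap.ker (ω (c • x)) : Submodule ℂ V) :=
        finiteDimensional_of_le hlt.le
      obtain ⟨m, e, ε, he⟩ := ih _ (finrank_lt_finrank_of_lt hlt) _ rfl
      exact ⟨m + 1, _, _, he.cons hω hcxU hcx hs⟩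

/-! ### The law of inertia -/

lemma finrank_span_range_eq_natCard {K E : Type*} [DivisionRing K] [AddCommGroup E] [Module K E]
    {e : ι → E} (he : LinearIndependent K e) :
    finrank K (span K (Set.range e)) = Nat.card ι :=
  finrank_eq_nat_card_basis (Basis.span he)

section Inertia

variable {e : ι → V}

lemma apply_sum_smul_self (he : ω.IsOrthoᵢ e) (s : Finset ι) (c : ι → ℂ) :
    ω (∑ i ∈ s, c i • e i) (∑ i ∈ s, c i • e i) =
      ∑ i ∈ s, (Complex.normSq (c i) : ℂ) * ω (e i) (e i) := by
  simp only [map_sum, LinearMap.sum_apply, LinearMap.map_smulₛₗ, LinearMap.smul_apply, map_smul,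
    smul_eq_mul]
  refine Finset.sum_congr rfl fun i hi ↦ ?_
  rw [Finset.sum_eq_single_of_mem i hi fun j _ hji ↦ by simp [he hji],
    Complex.normSq_eq_conj_mul_self]
  ring

lemma posDefOn_span_range (he : ω.IsOrthoᵢ e) (hpos : ∀ i, 0 < (ω (e i) (e i)).re) :
    PosDefOn ω (span ℂ (Set.range e)) := by
  intro x hx hx₀
  obtain ⟨c, rfl⟩ := Finsupp.mem_span_range_iff_exists_finsupp.mp hx
  rw [Finsupp.sum, apply_sum_smul_self he, Complex.re_sum]
  refine Finset.sum_pos (fun i hi ↦ ?_) (Finset.nonempty_of_sum_ne_zero hx₀)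
  rw [Complex.re_ofReal_mul]
  exact mul_pos (Complex.normSq_pos.mpr (Finsupp.mem_support_iff.mp hi)) (hpos i)

lemma re_apply_self_nonpos_of_mem_span_range (he : ω.IsOrthoᵢ e)
    (hnonpos : ∀ i, (ω (e i) (e i)).re ≤ 0) {x : V} (hx : x ∈ span ℂ (Set.range e)) :
    (ω x x).re ≤ 0 := by
  obtain ⟨c, rfl⟩ := Finsupp.mem_span_range_iff_exists_finsupp.mp hx
  rw [Finsupp.sum, apply_sum_smul_self he, Complex.re_sum]
  refine Finset.sum_nonpos fun i _ ↦ ?_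
  rw [Complex.re_ofReal_mul]
  exact mul_nonpos_of_nonneg_of_nonpos (Complex.normSq_nonneg _) (hnonpos i)

lemma isOrthoᵢ_subtype_val (he : ω.IsOrthoᵢ e) (P : ι → Prop) :
    ω.IsOrthoᵢ fun i : {i // P i} ↦ e i :=
  fun _ _ hij ↦ he (Subtype.coe_ne_coe.mpr hij)

lemma finrank_le_card_pos_of_posDefOn [Finite ι] (he : LinearIndependent ℂ e) (ho : ω.IsOrthoᵢ e)
    {W : Submodule ℂ V} (hW : W ≤ span ℂ (Set.range e)) (hpos : PosDefOn ω W) :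
    finrank ℂ W ≤ Nat.card {i // 0 < (ω (e i) (e i)).re} := by
  let N := span ℂ (Set.range fun i : {i // ¬ 0 < (ω (e i) (e i)).re} ↦ e i)
  have hWN : W ⊓ N = ⊥ := by
    refine (Submodule.eq_bot_iff _).mpr fun x hx ↦ by_contra fun hx₀ ↦ ?_
    exact (hpos x hx.1 hx₀).not_ge <| re_apply_self_nonpos_of_mem_span_range
      (isOrthoᵢ_subtype_val ho _) (fun i ↦ not_lt.mp i.2) hx.2
  have hN : N ≤ span ℂ (Set.range e) := span_mono (Set.range_comp_subset_range _ e)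
  have : FiniteDimensional ℂ (span ℂ (Set.range e)) :=
    .span_of_finite ℂ (Set.finite_range e)
  have := finiteDimensional_of_le hW
  have := finiteDimensional_of_le hN
  have hsum := finrank_sup_add_finrank_inf_eq W N
  have hle := finrank_mono (sup_le hW hN)
  have hcard : finrank ℂ N = Nat.card {i // ¬ 0 < (ω (e i) (e i)).re} :=
    finrank_span_range_eq_natCard (he.comp _ Subtype.val_injective)
  rw [hWN, finrank_bot, add_zero, hcard] at hsum
  rw [hsum, finrank_span_range_eq_natCard he,
    ← Nat.card_congr (Equiv.sumCompl fun i ↦ 0 < (ω (e i) (e i)).re), Nat.card_sum] at hle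
  exact Nat.le_of_add_le_add_right hle

lemma isGreatest_finrank_posDefOn [Finite ι] (he : LinearIndependent ℂ e) (ho : ω.IsOrthoᵢ e) :
    IsGreatest {d | ∃ W : Submodule ℂ V, W ≤ span ℂ (Set.range e) ∧ PosDefOn ω W ∧
      finrank ℂ W = d} (Nat.card {i // 0 < (ω (e i) (e i)).re}) := by
  constructor
  · exact ⟨span ℂ (Set.range fun i : {i // 0 < (ω (e i) (e i)).re} ↦ e i),
      span_mono (Set.range_comp_subset_range _ e),
      posDefOn_span_range (isOrthoᵢ_subtype_val ho _) Subtype.prop,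
      finrank_span_range_eq_natCard (he.comp _ Subtype.val_injective)⟩
  · rintro _ ⟨W, hW, hpos, rfl⟩
    exact finrank_le_card_pos_of_posDefOn he ho hW hpos

lemma negDefOn_iff_posDefOn_neg {W : Submodule ℂ V} : NegDefOn ω W ↔ PosDefOn (-ω) W := by
  simp [NegDefOn, PosDefOn]

lemma isGreatest_finrank_negDefOn [Finite ι] (he : LinearIndependent ℂ e) (ho : ω.IsOrthoᵢ e) :
    IsGreatest {d | ∃ W : Submodule ℂ V, W ≤ span ℂ (Set.range e) ∧ NegDefOn ω W ∧
      finrank ℂ W = d} (Nat.card {i // (ω (e i) (e i)).re < 0}) := by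
  have ho' : (-ω).IsOrthoᵢ e := fun i j hij ↦ neg_eq_zero.mpr (ho hij)
  simpa [negDefOn_iff_posDefOn_neg] using isGreatest_finrank_posDefOn he ho'

lemma span_range_inf_perp_eq (ho : ω.IsOrthoᵢ e) :
    span ℂ (Set.range e) ⊓ perp ω (span ℂ (Set.range e)) =
      span ℂ (Set.range fun i : {i // ω (e i) (e i) = 0} ↦ e i) := by
  refine le_antisymm ?_ (span_le.mpr ?_)
  · rintro x ⟨hx, hxperp⟩
    obtain ⟨c, rfl⟩ := Finsupp.mem_span_range_iff_exists_finsupp.mp hx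
    refine sum_mem fun i hi ↦ smul_mem _ _ (subset_span ⟨⟨i, ?_⟩, rfl⟩)
    have happly : star (c i) * ω (e i) (e i) = 0 := by
      rw [← hxperp (e i) (subset_span ⟨i, rfl⟩), Finsupp.sum, map_sum, LinearMap.sum_apply,
        Finset.sum_eq_single_of_mem i hi fun j _ hji ↦ by simp [ho hji]]
      simp
    exact (mul_eq_zero.mp happly).resolve_left (star_ne_zero.mpr (Finsupp.mem_support_iff.mp hi))
  · rintro _ ⟨⟨i, hi⟩, rfl⟩
    have hker : span ℂ (Set.range e) ≤ LinearMap.ker (ω (e i)) := by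
      refine span_le.mpr ?_
      rintro _ ⟨j, rfl⟩
      obtain rfl | hij := eq_or_ne i j
      exacts [hi, ho hij]
    exact ⟨subset_span ⟨i, rfl⟩, fun u hu ↦ hker hu⟩

lemma finrank_radical_eq_card_zero (he : LinearIndependent ℂ e) (ho : ω.IsOrthoᵢ e) :
    finrank ℂ (span ℂ (Set.range e) ⊓ perp ω (span ℂ (Set.range e)) : Submodule ℂ V) =
      Nat.card {i // ω (e i) (e i) = 0} := by
  rw [span_range_inf_perp_eq ho]
  exact finrank_span_range_eq_natCard (he.comp _ Subtype.val_injective)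

end Inertia

namespace IsSylvesterBasis

variable {e e' : ι → V} {f : κ → V} {ε : ι → SignType} {δ : κ → SignType}

theorem hasSignature [Finite ι] (he : IsSylvesterBasis ω U e ε) :
    HasSignature ω U (Nat.card {i // ε i = 1}) (Nat.card {i // ε i = -1})
      (Nat.card {i // ε i = 0}) := by
  have hpos (i) : 0 < (ω (e i) (e i)).re ↔ ε i = 1 := by
    rw [he.apply_self]
    cases ε i <;> simp
  have hneg (i) : (ω (e i) (e i)).re < 0 ↔ ε i = -1 := by
    rw [he.apply_self]
    cases ε i <;> simp
  have hzero (i) : ω (e i) (e i) = 0 ↔ ε i = 0 := by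
    rw [he.apply_self]
    cases ε i <;> simp
  obtain rfl := he.span_range
  refine ⟨?_, ?_, ?_⟩
  · simpa only [hpos] using isGreatest_finrank_posDefOn he.linearIndependent he.isOrthoᵢ
  · simpa only [hneg] using isGreatest_finrank_negDefOn he.linearIndependent he.isOrthoᵢ
  · simpa only [hzero] using finrank_radical_eq_card_zero he.linearIndependent he.isOrthoᵢ

lemma map (he : IsSylvesterBasis ω U e ε) {φ : V ≃ₗ[ℂ] V} (hφ : φ ∈ unitaryGroup ω) :
    IsSylvesterBasis ω (U.map φ.toLinearMap) (φ ∘ e) ε where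
  linearIndependent := he.linearIndependent.map' φ.toLinearMap φ.ker
  span_range := by rw [← he.span_range, map_span, ← Set.range_comp]; rfl
  isOrthoᵢ i j hij := (hφ _ _).trans (he.isOrthoᵢ hij)
  apply_self i := (hφ _ _).trans (he.apply_self i)

lemma comp_equiv (he : IsSylvesterBasis ω U e ε) (σ : κ ≃ ι) :
    IsSylvesterBasis ω U (e ∘ σ) (ε ∘ σ) where
  linearIndependent := he.linearIndependent.comp σ σ.injective
  span_range := by rw [σ.surjective.range_comp, he.span_range]
  isOrthoᵢ _ _ hij := he.isOrthoᵢ (σ.injective.ne hij)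
  apply_self i := he.apply_self (σ i)

lemma exists_mem_unitaryGroup_map_eq [Finite ι] (hω : IsHermitianForm ω) (hnd : IsNondeg ω)
    (he : IsSylvesterBasis ω U₁ e ε) (he' : IsSylvesterBasis ω U₂ e' ε) :
    ∃ φ ∈ unitaryGroup ω, U₁.map φ.toLinearMap = U₂ := by
  have hgram (i j) : ω (e i) (e j) = ω (e' i) (e' j) := by
    obtain rfl | hij := eq_or_ne i j
    · rw [he.apply_self, he'.apply_self]
    · rw [he.isOrthoᵢ hij, he'.isOrthoᵢ hij]
  obtain ⟨φ, hφ, hφe⟩ := hω.exists_mem_unitaryGroup_of_gram_eq hnd he.linearIndependent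
    he'.linearIndependent hgram
  refine ⟨φ, hφ, (he.map hφ).span_range.symm.trans ?_⟩
  rw [show φ ∘ e = e' from funext hφe, he'.span_range]

lemma exists_equiv_of_hasSignature [Finite ι] [Finite κ] (he : IsSylvesterBasis ω U₁ e ε)
    (hf : IsSylvesterBasis ω U₂ f δ) {a b c : ℕ} (h₁ : HasSignature ω U₁ a b c)
    (h₂ : HasSignature ω U₂ a b c) : ∃ σ : ι ≃ κ, δ ∘ σ = ε := by
  obtain ⟨hpos₁, hneg₁, hzero₁⟩ := he.hasSignature
  obtain ⟨hpos₂, hneg₂, hzero₂⟩ := hf.hasSignature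
  have hcard (s : SignType) : Nat.card {i // ε i = s} = Nat.card {j // δ j = s} := by
    cases s with
    | zero => exact (hzero₁.symm.trans h₁.2.2).trans (h₂.2.2.symm.trans hzero₂)
    | neg => exact (hneg₁.unique h₁.2.1).trans (h₂.2.1.unique hneg₂)
    | pos => exact (hpos₁.unique h₁.1).trans (h₂.1.unique hpos₂)
  let fiberEquiv (s : SignType) : {i // ε i = s} ≃ {j // δ j = s} :=
    (Finite.card_eq.mp (hcard s)).some
  exact ⟨Equiv.ofFiberEquiv fiberEquiv, funext (Equiv.ofFiberEquiv_map fiberEquiv)⟩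

end IsSylvesterBasis

theorem same_unitary_orbit_iff_same_signature_general
    (ω : V →ₗ⋆[ℂ] V →ₗ[ℂ] ℂ) (hherm : IsHermitianForm ω) (hnd : IsNondeg ω)
    (U₁ U₂ : Submodule ℂ V) [FiniteDimensional ℂ U₁] [FiniteDimensional ℂ U₂] :
    (∃ φ : V ≃ₗ[ℂ] V, (∀ x y, ω (φ x) (φ y) = ω x y) ∧
        Submodule.map (φ : V →ₗ[ℂ] V) U₁ = U₂) ↔
      ∃ a b c, HasSignature ω U₁ a b c ∧ HasSignature ω U₂ a b c := by
  obtain ⟨m₁, e₁, ε₁, he₁⟩ := hherm.exists_isSylvesterBasis U₁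
  obtain ⟨m₂, e₂, ε₂, he₂⟩ := hherm.exists_isSylvesterBasis U₂
  constructor
  · rintro ⟨φ, hφ, rfl⟩
    exact ⟨_, _, _, he₁.hasSignature, (he₁.map hφ).hasSignature⟩
  · rintro ⟨a, b, c, h₁, h₂⟩
    obtain ⟨σ, rfl⟩ := he₁.exists_equiv_of_hasSignature he₂ h₁ h₂
    exact he₁.exists_mem_unitaryGroup_map_eq hherm hnd (he₂.comp_equiv σ)

theorem same_unitary_orbit_iff_same_signature
    [FiniteDimensional ℂ V] (n p k : ℕ) (hn : finrank ℂ V = n) (hpn : p ≤ n) (hk : k ≤ n)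
    (ω : V →ₗ⋆[ℂ] V →ₗ[ℂ] ℂ) (hherm : IsHermitianForm ω) (hnd : IsNondeg ω)
    (hsig : HasSignature ω ⊤ p (n - p) 0)
    (U₁ U₂ : Submodule ℂ V) (hU₁ : finrank ℂ U₁ = k) (hU₂ : finrank ℂ U₂ = k) :
    (∃ φ : V ≃ₗ[ℂ] V, (∀ x y, ω (φ x) (φ y) = ω x y) ∧
        Submodule.map (φ : V →ₗ[ℂ] V) U₁ = U₂) ↔
      ∃ a b c, HasSignature ω U₁ a b c ∧ HasSignature ω U₂ a b c :=
  same_unitary_orbit_iff_same_signature_general ω hherm hnd U₁ U₂
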